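/- Let v*, w, and v_i (i ∈ I, i ≠ s) and u_k (k ∈ K) be vectors in ℝ^d, let α : I → ℝ with Σ_{i∈I} α_i = 1 and 0 < α_s < 1, let β : K → ℝ with Σ_{k∈K} β_k = 1, and let θ_d > θ, p ∈ [0, 1), ψ_s, ψ ∈ ℝ. Assume ⟨v*, v*⟩ = θ_d; ⟨v*, v_i⟩ = θ for all i ≠ s; ⟨v*, u_k⟩ = θ for all k; ⟨v*, w⟩ = ψ_s; and ⟨v_i, w⟩ = ψ for all i ≠ s. Put v̂_1 = α_s·v* + Σ_{i≠s} α_i·v_i and v̂_0 = Σ_k β_k·u_k, and define the attention-parameter update direction E = (1−p)·[α_s·⟨v*, w⟩·(v* − v̂_1) + Σ_{i≠s} α_i·⟨v_i, w⟩·(v_i − v̂_1)] − p·Σ_k β_k·⟨u_k, w⟩·(u_k − v̂_0). Then ⟨v*, E⟩ = (1−p)·α_s·(1−α_s)·(ψ_s − ψ)·(θ_d − θ); in particular, if ψ_s > ψ then ⟨v*, E⟩ > 0. -/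

import Mathlib

open scoped RealInnerProductSpace

/-- core of 'Orientation of the `a` parameter': with the stated inner
products, pooled vectors `v̂₁ = α s • v* + ∑_{i≠s} α i • v i` and `v̂₀ = ∑ k, β k • u k`,
the attention update direction
`E = (1−p) • [α s·⟪v*,w⟫ • (v* − v̂₁) + ∑_{i≠s} α i·⟪v i,w⟫ • (v i − v̂₁)]
      − p • ∑ k, β k·⟪u k,w⟫ • (u k − v̂₀)`
satisfies `⟪v*, E⟫ = (1−p)·α s·(1−α s)·(ψ_s − ψ)·(θ_d − θ)`; in particular if
`ψ_s > ψ` then `⟪v*, E⟫ > 0`. -/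
theorem orientation_of_a_parameter {I K : Type*} [Fintype I] [Fintype K] [DecidableEq I]
    (d : ℕ) (s : I) (vstar w : EuclideanSpace ℝ (Fin d))
    (v : I → EuclideanSpace ℝ (Fin d)) (u : K → EuclideanSpace ℝ (Fin d))
    (α : I → ℝ) (β : K → ℝ) (θd θ p ψs ψ : ℝ)
    (hα1 : ∑ i, α i = 1) (hαs0 : 0 < α s) (hαs1 : α s < 1)
    (hβ1 : ∑ k, β k = 1)
    (hθ : θ < θd) (hp0 : 0 ≤ p) (hp1 : p < 1)
    (hself : ⟪vstar, vstar⟫ = θd)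
    (hcrossv : ∀ i, i ≠ s → ⟪vstar, v i⟫ = θ)
    (hcrossu : ∀ k, ⟪vstar, u k⟫ = θ)
    (hψs : ⟪vstar, w⟫ = ψs)
    (hψ : ∀ i, i ≠ s → ⟪v i, w⟫ = ψ) :
    ∀ vhat1 vhat0 E : EuclideanSpace ℝ (Fin d),
      vhat1 = α s • vstar + ∑ i ∈ Finset.univ.erase s, α i • v i →
      vhat0 = ∑ k, β k • u k →
      E = (1 - p) • ((α s * ⟪vstar, w⟫) • (vstar - vhat1) +
            ∑ i ∈ Finset.univ.erase s, (α i * ⟪v i, w⟫) • (v i - vhat1)) -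
          p • (∑ k, (β k * ⟪u k, w⟫) • (u k - vhat0)) →
      ⟪vstar, E⟫ = (1 - p) * α s * (1 - α s) * (ψs - ψ) * (θd - θ) ∧
        (ψ < ψs → 0 < ⟪vstar, E⟫) := by
  intro vhat1 vhat0 E h1 h0 hE
  have hS : ∑ i ∈ Finset.univ.erase s, α i = 1 - α s := by
    have := Finset.add_sum_erase Finset.univ α (Finset.mem_univ s)
    linarith
  have i1 : ⟪vstar, vhat1⟫ = α s * θd + (1 - α s) * θ := by
    rw [h1, inner_add_right, inner_smul_right, inner_sum, hself, ← hS, Finset.sum_mul]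
    congr 1
    refine Finset.sum_congr rfl fun i hi => ?_
    rw [inner_smul_right, hcrossv i (Finset.ne_of_mem_erase hi)]
  have i0 : ⟪vstar, vhat0⟫ = θ := by
    rw [h0, inner_sum]
    simp only [inner_smul_right, hcrossu]
    rw [← Finset.sum_mul, hβ1, one_mul]
  have j1 : ⟪vstar, ∑ i ∈ Finset.univ.erase s, (α i * ⟪v i, w⟫) • (v i - vhat1)⟫
      = (1 - α s) * (ψ * (θ - (α s * θd + (1 - α s) * θ))) := by
    rw [inner_sum, ← hS, Finset.sum_mul, hS]
    refine Finset.sum_congr rfl fun i hi => ?_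
    have hi' := Finset.ne_of_mem_erase hi
    rw [inner_smul_right, inner_sub_right, hcrossv i hi', hψ i hi', i1]
    ring
  have j0 : ⟪vstar, ∑ k, (β k * ⟪u k, w⟫) • (u k - vhat0)⟫ = 0 := by
    rw [inner_sum]
    refine Finset.sum_eq_zero fun k _ => ?_
    rw [inner_smul_right, inner_sub_right, hcrossu, i0, sub_self, mul_zero]
  have key : ⟪vstar, E⟫ = (1 - p) * α s * (1 - α s) * (ψs - ψ) * (θd - θ) := by
    rw [hE, inner_sub_right, inner_smul_right, inner_smul_right, inner_add_right, j1, j0,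
      inner_smul_right, inner_sub_right, hself, i1, hψs]
    ring
  refine ⟨key, fun h => ?_⟩
  rw [key]
  have a1 := sub_pos.2 hp1
  have a2 := sub_pos.2 hαs1
  have a3 := sub_pos.2 h
  have a4 := sub_pos.2 hθ
  positivity
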